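/- arXiv:1104.1872 — 2 statements merged into one kernel-verified Lean document; each statement's English description precedes it below -/
import Mathlib

section
/- Let 𝒢 be a group structure on {1,…,p} with positive weights (η_g) such that every index j ∈ {1,…,p} belongs to at least one group, and let Ω(w) = Σ_{g∈𝒢} η_g ‖w_g‖_∞. Then for every κ ∈ ℝ^p, the dual norm Ω*(κ) := max_{Ω(z) ≤ 1} z⊤κ equals the minimum of τ ≥ 0 over all pairs (τ, ξ), where ξ = (ξ^g)_{g∈𝒢} is a family of vectors in ℝ^p satisfying Σ_{g∈𝒢} ξ^g = κ, ξ^g_j = 0 for j ∉ g, and ‖ξ^g‖₁ ≤ τη_g for every g ∈ 𝒢; moreover this minimum is attained. -/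
open Finset

/-- The ℓ∞-norm of the subvector of `w` indexed by the group `g`
(equal to `max_{j ∈ g} |w j|` for nonempty `g`, and `0` for empty `g`). -/
noncomputable def gsup {p : ℕ} (g : Finset (Fin p)) (w : Fin p → ℝ) : ℝ :=
  ↑(g.sup fun j => Real.nnabs (w j))

/-- The structured norm `Ω(w) = ∑_{g ∈ 𝒢} η_g ‖w_g‖_∞`. -/
noncomputable def Omega {p : ℕ} (G : Finset (Finset (Fin p)))
    (η : Finset (Fin p) → ℝ) (w : Fin p → ℝ) : ℝ :=
  ∑ g ∈ G, η g * gsup g w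

/-- ℓ₁-norm of a vector. -/
def l1 {p : ℕ} (v : Fin p → ℝ) : ℝ := ∑ j, |v j|

/-- A family `ξ = (ξ^g)_{g ∈ 𝒢}` is dual-feasible at level `lam` if `ξ^g_j = 0` for
`j ∉ g` and `‖ξ^g‖₁ ≤ lam * η_g` for every `g ∈ 𝒢`. -/
def DualFeasible {p : ℕ} (G : Finset (Finset (Fin p))) (η : Finset (Fin p) → ℝ)
    (lam : ℝ) (ξ : Finset (Fin p) → Fin p → ℝ) : Prop :=
  ∀ g ∈ G, (∀ j, j ∉ g → ξ g j = 0) ∧ l1 (ξ g) ≤ lam * η g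

/-- Primal (proximal) objective `½‖u − w‖₂² + λ Ω(w)`. -/
noncomputable def proxObj {p : ℕ} (G : Finset (Finset (Fin p)))
    (η : Finset (Fin p) → ℝ) (lam : ℝ) (u w : Fin p → ℝ) : ℝ :=
  (1/2) * ∑ j, (u j - w j)^2 + lam * Omega G η w

/-- Dual objective `½‖u − ∑_{g} ξ^g‖₂²`. -/
noncomputable def dualObj {p : ℕ} (G : Finset (Finset (Fin p))) (u : Fin p → ℝ)
    (ξ : Finset (Fin p) → Fin p → ℝ) : ℝ :=
  (1/2) * ∑ j, (u j - ∑ g ∈ G, ξ g j)^2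

/-- The dual norm `Ω*(κ) = max_{Ω(z) ≤ 1} z⊤κ`. -/
noncomputable def dualNorm {p : ℕ} (G : Finset (Finset (Fin p)))
    (η : Finset (Fin p) → ℝ) (κ : Fin p → ℝ) : ℝ :=
  sSup {t : ℝ | ∃ z : Fin p → ℝ, Omega G η z ≤ 1 ∧ t = ∑ j, z j * κ j}

lemma le_gsup {p : ℕ} {g : Finset (Fin p)} {j : Fin p} (hj : j ∈ g) (z : Fin p → ℝ) :
    |z j| ≤ gsup g z := by
  have h := Finset.le_sup (f := fun j => Real.nnabs (z j)) hj
  have h2 : ((Real.nnabs (z j) : NNReal) : ℝ) ≤ gsup g z := NNReal.coe_le_coe.mpr h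
  simpa using h2

lemma gsup_nonneg {p : ℕ} (g : Finset (Fin p)) (z : Fin p → ℝ) : 0 ≤ gsup g z :=
  NNReal.coe_nonneg _

lemma gsup_attained {p : ℕ} {g : Finset (Fin p)} (hg : g.Nonempty) (z : Fin p → ℝ) :
    ∃ j ∈ g, gsup g z = |z j| := by
  obtain ⟨j, hj, h⟩ := Finset.exists_mem_eq_sup g hg (fun j => Real.nnabs (z j))
  refine ⟨j, hj, ?_⟩
  unfold gsup
  rw [h]
  simp

lemma gsup_smul {p : ℕ} {g : Finset (Fin p)} (hg : g.Nonempty) (z : Fin p → ℝ) {c : ℝ}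
    (hc : 0 ≤ c) : gsup g (fun j => c * z j) = c * gsup g z := by
  apply le_antisymm
  · obtain ⟨j, hj, h⟩ := gsup_attained hg (fun j => c * z j)
    rw [h, abs_mul, abs_of_nonneg hc]
    exact mul_le_mul_of_nonneg_left (le_gsup hj z) hc
  · obtain ⟨j, hj, h⟩ := gsup_attained hg z
    rw [h]
    have := le_gsup hj (fun j => c * z j)
    simpa only [abs_mul, abs_of_nonneg hc] using this

lemma weak_duality {p : ℕ} (G : Finset (Finset (Fin p))) (η : Finset (Fin p) → ℝ)
    (κ : Fin p → ℝ) (τ : ℝ) (ξ : Finset (Fin p) → Fin p → ℝ)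
    (h1 : ∀ j, ∑ g ∈ G, ξ g j = κ j)
    (h2 : ∀ g ∈ G, (∀ j, j ∉ g → ξ g j = 0) ∧ l1 (ξ g) ≤ τ * η g) (z : Fin p → ℝ) :
    ∑ j, z j * κ j ≤ τ * Omega G η z := by
  have e : ∑ j, z j * κ j = ∑ g ∈ G, ∑ j, z j * ξ g j := by
    rw [Finset.sum_comm]
    refine Finset.sum_congr rfl fun j _ => ?_
    rw [← h1 j, Finset.mul_sum]
  rw [e, Omega, Finset.mul_sum]
  refine Finset.sum_le_sum fun g hg => ?_
  calc ∑ j, z j * ξ g j ≤ ∑ j, gsup g z * |ξ g j| := by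
        refine Finset.sum_le_sum fun j _ => ?_
        by_cases hj : j ∈ g
        · refine (le_abs_self _).trans ?_
          rw [abs_mul]
          exact mul_le_mul_of_nonneg_right (le_gsup hj z) (abs_nonneg _)
        · simp [(h2 g hg).1 j hj]
    _ = gsup g z * l1 (ξ g) := by rw [l1, Finset.mul_sum]
    _ ≤ gsup g z * (τ * η g) := mul_le_mul_of_nonneg_left (h2 g hg).2 (gsup_nonneg g z)
    _ = τ * (η g * gsup g z) := by ring

lemma exists_feasible {p : ℕ} (G : Finset (Finset (Fin p))) (η : Finset (Fin p) → ℝ)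
    (hη : ∀ g ∈ G, 0 < η g)
    (hcover : ∀ j : Fin p, ∃ g ∈ G, j ∈ g) (κ : Fin p → ℝ) :
    ∃ (τ : ℝ) (ξ : Finset (Fin p) → Fin p → ℝ), 0 ≤ τ ∧ (∀ j, ∑ g ∈ G, ξ g j = κ j) ∧
      (∀ g ∈ G, (∀ j, j ∉ g → ξ g j = 0) ∧ l1 (ξ g) ≤ τ * η g) := by
  choose c hc hjc using hcover
  have hl : ∀ v : Fin p → ℝ, 0 ≤ l1 v := fun v => Finset.sum_nonneg fun _ _ => abs_nonneg _
  let ξ : Finset (Fin p) → Fin p → ℝ := fun g j => if g = c j then κ j else 0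
  have hnn : ∀ g ∈ G, 0 ≤ l1 (ξ g) / η g := fun g hg => div_nonneg (hl _) (hη g hg).le
  refine ⟨∑ g ∈ G, l1 (ξ g) / η g, ξ, Finset.sum_nonneg hnn, ?_, ?_⟩
  · intro j
    simp [ξ, hc j]
  · intro g hg
    refine ⟨?_, ?_⟩
    · intro j hj
      have : g ≠ c j := by
        rintro rfl
        exact hj (hjc j)
      simp [ξ, this]
    · rw [← div_le_iff₀ (hη g hg)]
      exact Finset.single_le_sum (f := fun g => l1 (ξ g) / η g) hnn hg

/-- The ball of vectors supported on `g` with `ℓ₁` norm at most `r`. -/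
def grpBall {p : ℕ} (g : Finset (Fin p)) (r : ℝ) : Set (Fin p → ℝ) :=
  {v | (∀ j, j ∉ g → v j = 0) ∧ l1 v ≤ r}

lemma grpBall_convex {p : ℕ} (g : Finset (Fin p)) (r : ℝ) : Convex ℝ (grpBall g r) := by
  intro x hx y hy a b ha hb hab
  refine ⟨fun j hj => by simp [hx.1 j hj, hy.1 j hj], ?_⟩
  calc l1 (a • x + b • y) ≤ ∑ j, (a * |x j| + b * |y j|) := by
        refine Finset.sum_le_sum fun j _ => ?_
        refine (abs_add_le _ _).trans ?_
        simp [abs_mul, abs_of_nonneg ha, abs_of_nonneg hb]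
    _ = a * l1 x + b * l1 y := by
        rw [Finset.sum_add_distrib, l1, l1, Finset.mul_sum, Finset.mul_sum]
    _ ≤ a * r + b * r := add_le_add (mul_le_mul_of_nonneg_left hx.2 ha)
        (mul_le_mul_of_nonneg_left hy.2 hb)
    _ = r := by rw [← add_mul, hab, one_mul]

lemma grpBall_compact {p : ℕ} (g : Finset (Fin p)) (r : ℝ) (hr : 0 ≤ r) :
    IsCompact (grpBall g r) := by
  apply Metric.isCompact_of_isClosed_isBounded
  · have : grpBall g r = (⋂ j, ⋂ (_ : j ∉ g), {v : Fin p → ℝ | v j = 0}) ∩ {v | l1 v ≤ r} := by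
      ext v
      simp [grpBall]
    rw [this]
    refine IsClosed.inter ?_ ?_
    · exact isClosed_iInter fun j => isClosed_iInter fun _ =>
        isClosed_eq (continuous_apply j) continuous_const
    · refine isClosed_le ?_ continuous_const
      unfold l1
      fun_prop
  · refine (Metric.isBounded_closedBall (x := (0 : Fin p → ℝ)) (r := r)).subset ?_
    intro v hv
    rw [mem_closedBall_zero_iff, pi_norm_le_iff_of_nonneg hr]
    intro j
    exact (Finset.single_le_sum (f := fun j => |v j|) (fun _ _ => abs_nonneg _)
      (Finset.mem_univ j)).trans hv.2

/-- the dual norm `Ω*(κ)` equals the attained minimum of `τ ≥ 0` over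
decompositions `κ = ∑_g ξ^g` with `Supp(ξ^g) ⊆ g` and `‖ξ^g‖₁ ≤ τ η_g`. -/
theorem stmt2 {p : ℕ} (G : Finset (Finset (Fin p))) (η : Finset (Fin p) → ℝ)
    (hne : ∀ g ∈ G, g.Nonempty) (hη : ∀ g ∈ G, 0 < η g)
    (hcover : ∀ j : Fin p, ∃ g ∈ G, j ∈ g) (κ : Fin p → ℝ) :
    ∃ (τ : ℝ) (ξ : Finset (Fin p) → Fin p → ℝ),
      0 ≤ τ ∧
      (∀ j, ∑ g ∈ G, ξ g j = κ j) ∧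
      (∀ g ∈ G, (∀ j, j ∉ g → ξ g j = 0) ∧ l1 (ξ g) ≤ τ * η g) ∧
      dualNorm G η κ = τ ∧
      (∀ (τ' : ℝ) (ξ' : Finset (Fin p) → Fin p → ℝ),
        0 ≤ τ' →
        (∀ j, ∑ g ∈ G, ξ' g j = κ j) →
        (∀ g ∈ G, (∀ j, j ∉ g → ξ' g j = 0) ∧ l1 (ξ' g) ≤ τ' * η g) →
        τ ≤ τ') := by
  obtain ⟨τ₀, ξ₀, hτ₀, hs₀, hf₀⟩ := exists_feasible G η hη hcover κ
  have hub : ∀ (τ' : ℝ) (ξ' : Finset (Fin p) → Fin p → ℝ), 0 ≤ τ' →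
      (∀ j, ∑ g ∈ G, ξ' g j = κ j) →
      (∀ g ∈ G, (∀ j, j ∉ g → ξ' g j = 0) ∧ l1 (ξ' g) ≤ τ' * η g) →
      ∀ t ∈ {t : ℝ | ∃ z : Fin p → ℝ, Omega G η z ≤ 1 ∧ t = ∑ j, z j * κ j}, t ≤ τ' := by
    rintro τ' ξ' h0 h1 h2 t ⟨z, hz, rfl⟩
    refine (weak_duality G η κ τ' ξ' h1 h2 z).trans ?_
    simpa using mul_le_mul_of_nonneg_left hz h0
  have hgz : ∀ g : Finset (Fin p), gsup g (0 : Fin p → ℝ) = 0 := by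
    intro g
    simp [gsup]
  have h0mem : (0 : ℝ) ∈ {t : ℝ | ∃ z : Fin p → ℝ, Omega G η z ≤ 1 ∧ t = ∑ j, z j * κ j} :=
    ⟨0, by simp [Omega, hgz], by simp⟩
  have hbdd : BddAbove {t : ℝ | ∃ z : Fin p → ℝ, Omega G η z ≤ 1 ∧ t = ∑ j, z j * κ j} :=
    ⟨τ₀, hub τ₀ ξ₀ hτ₀ hs₀ hf₀⟩
  have hD0 : 0 ≤ dualNorm G η κ := le_csSup hbdd h0mem
  have hOnn : ∀ z, 0 ≤ Omega G η z := fun z =>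
    Finset.sum_nonneg fun g hg => mul_nonneg (hη g hg).le (gsup_nonneg g z)
  have hhom : ∀ z : Fin p → ℝ, ∑ j, z j * κ j ≤ dualNorm G η κ * Omega G η z := by
    intro z
    rcases (hOnn z).eq_or_lt with h | h
    · rw [← h, mul_zero]
      have := weak_duality G η κ τ₀ ξ₀ hs₀ hf₀ z
      rwa [← h, mul_zero] at this
    · have hmem := le_csSup hbdd (a := ∑ j, ((Omega G η z)⁻¹ * z j) * κ j)
        ⟨fun j => (Omega G η z)⁻¹ * z j, ?_, rfl⟩
      · change _ ≤ dualNorm G η κ at hmem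
        simp only [mul_assoc] at hmem
        rw [← Finset.mul_sum, inv_mul_le_iff₀ h] at hmem
        linarith
      · have : Omega G η (fun j => (Omega G η z)⁻¹ * z j) = (Omega G η z)⁻¹ * Omega G η z := by
          have hc : 0 ≤ (Omega G η z)⁻¹ := inv_nonneg.mpr h.le
          generalize (Omega G η z)⁻¹ = c at hc
          unfold Omega
          rw [Finset.mul_sum]
          refine Finset.sum_congr rfl fun g hg => ?_
          rw [gsup_smul (hne g hg) z hc]
          ring
        rw [this, inv_mul_cancel₀ h.ne']
  set D := dualNorm G η κ with hD
  let S : Set (Finset (Fin p) → Fin p → ℝ) := Set.pi Set.univ fun g => grpBall g (D * |η g|)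
  let L : (Finset (Fin p) → Fin p → ℝ) →ₗ[ℝ] (Fin p → ℝ) := ∑ g ∈ G, LinearMap.proj g
  have hL : ∀ ξ, L ξ = ∑ g ∈ G, ξ g := by
    intro ξ
    simp [L]
  have hLc : Continuous L := by
    have : (L : (Finset (Fin p) → Fin p → ℝ) → (Fin p → ℝ)) = fun ξ => ∑ g ∈ G, ξ g := funext hL
    rw [this]
    fun_prop
  have hSc : IsCompact S :=
    isCompact_univ_pi fun g => grpBall_compact g _ (mul_nonneg hD0 (abs_nonneg _))
  have hSv : Convex ℝ S := convex_pi fun g _ => grpBall_convex g _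
  have key : κ ∈ L '' S := by
    by_contra hκ
    obtain ⟨f, u, hf1, hf2⟩ := geometric_hahn_banach_closed_point (hSv.linear_image L)
      (hSc.image hLc).isClosed hκ
    let z : Fin p → ℝ := fun j => f (Pi.single j 1)
    have hfz : ∀ x, f x = ∑ j, z j * x j := by
      intro x
      have := LinearMap.pi_apply_eq_sum_univ (f : (Fin p → ℝ) →ₗ[ℝ] ℝ) x
      simp only [ContinuousLinearMap.coe_coe, smul_eq_mul] at this
      rw [this]
      refine Finset.sum_congr rfl fun j _ => ?_
      rw [mul_comm]
      congr 2
      ext i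
      simp [Pi.single_apply, eq_comm]
    have hch : ∀ g : Finset (Fin p), ∃ v ∈ grpBall g (D * |η g|),
        (g ∈ G → ∑ j, z j * v j = D * (η g * gsup g z)) := by
      intro g
      by_cases hg : g ∈ G
      · obtain ⟨i, hi, hiz⟩ := gsup_attained (hne g hg) z
        have hs : |SignType.sign (z i) * (1 : ℝ)| ≤ 1 := by
          rcases lt_trichotomy (z i) 0 with h | h | h <;> simp [h]
        refine ⟨Pi.single i (D * η g * SignType.sign (z i)), ⟨?_, ?_⟩, fun _ => ?_⟩
        · intro j hj
          have : j ≠ i := by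
            rintro rfl
            exact hj hi
          simp [this]
        · unfold l1
          rw [Finset.sum_eq_single i (fun j _ hj => by simp [hj]) (by simp)]
          rw [Pi.single_eq_same, abs_mul, abs_mul, abs_of_nonneg hD0]
          rw [mul_one] at hs
          exact mul_le_of_le_one_right (mul_nonneg hD0 (abs_nonneg _)) hs
        · rw [Finset.sum_eq_single i (fun j _ hj => by simp [hj]) (by simp)]
          rw [Pi.single_eq_same, hiz, ← sign_mul_self (z i)]
          ring
      · refine ⟨0, ⟨by simp, ?_⟩, fun h => absurd h hg⟩
        simpa [l1] using mul_nonneg hD0 (abs_nonneg (η g))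
    choose v hv hvz using hch
    have h1 := hf1 (L v) ⟨v, fun g _ => hv g, rfl⟩
    have h2 : f (L v) = D * Omega G η z := by
      rw [hL, map_sum, Omega, Finset.mul_sum]
      exact Finset.sum_congr rfl fun g hg => by rw [hfz, hvz g hg]
    have h3 := hhom z
    rw [hfz] at hf2
    linarith
  obtain ⟨ξ, hξ, hξκ⟩ := key
  refine ⟨D, ξ, hD0, ?_, ?_, rfl, ?_⟩
  · intro j
    rw [← hξκ, hL, Finset.sum_apply]
  · intro g hg
    have : ξ g ∈ grpBall g (D * |η g|) := hξ g (Set.mem_univ g)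
    rw [abs_of_pos (hη g hg)] at this
    exact this
  · intro τ' ξ' h0 h1 h2
    exact csSup_le ⟨0, h0mem⟩ (hub τ' ξ' h0 h1 h2)
end

section
/- Let 𝒢 be a group structure on {1,…,p} with positive weights (η_g) such that every index belongs to at least one group, let Ω(w) = Σ_{g∈𝒢} η_g ‖w_g‖_∞, let λ > 0 and u ∈ ℝ^p. Then the optimal value of the proximal problem min_{w∈ℝ^p} ½‖u − w‖₂² + λΩ(w) plus the optimal value of the dual problem min ½‖u − Σ_{g∈𝒢} ξ^g‖₂², taken over families ξ = (ξ^g)_{g∈𝒢} that are dual-feasible at level λ, equals ½‖u‖₂². -/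
open Finset

lemma aux_le_gsup {p : ℕ} (g : Finset (Fin p)) (w : Fin p → ℝ) (j : Fin p) (hj : j ∈ g) :
    |w j| ≤ gsup g w := by
  have h := Finset.le_sup (f := fun j => Real.nnabs (w j)) hj
  have h2 : ((Real.nnabs (w j) : NNReal) : ℝ) ≤ gsup g w := by
    unfold gsup
    exact_mod_cast h
  simpa using h2

lemma aux_gsup_eq {p : ℕ} (g : Finset (Fin p)) (hg : g.Nonempty) (w : Fin p → ℝ) :
    ∃ j ∈ g, gsup g w = |w j| := by
  obtain ⟨j, hj, h⟩ := Finset.exists_mem_eq_sup g hg (fun j => Real.nnabs (w j))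
  refine ⟨j, hj, ?_⟩
  unfold gsup
  rw [h]
  simp

lemma aux_pair_le {p : ℕ} (G : Finset (Finset (Fin p))) (η : Finset (Fin p) → ℝ)
    (lam : ℝ) (ξ : Finset (Fin p) → Fin p → ℝ) (h : DualFeasible G η lam ξ) (w : Fin p → ℝ) :
    ∑ j, w j * ∑ g ∈ G, ξ g j ≤ lam * Omega G η w := by
  simp_rw [Finset.mul_sum]
  rw [Finset.sum_comm]
  unfold Omega
  rw [Finset.mul_sum]
  refine Finset.sum_le_sum fun g hg => ?_
  obtain ⟨h1, h2⟩ := h g hg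
  have h0 : 0 ≤ gsup g w := NNReal.coe_nonneg _
  calc ∑ j, w j * ξ g j ≤ ∑ j, gsup g w * |ξ g j| := by
        refine Finset.sum_le_sum fun j _ => ?_
        by_cases hj : j ∈ g
        · calc w j * ξ g j ≤ |w j * ξ g j| := le_abs_self _
            _ = |w j| * |ξ g j| := abs_mul _ _
            _ ≤ _ := mul_le_mul_of_nonneg_right (aux_le_gsup g w j hj) (abs_nonneg _)
        · simp [h1 j hj]
    _ = gsup g w * l1 (ξ g) := by rw [l1, Finset.mul_sum]
    _ ≤ gsup g w * (lam * η g) := mul_le_mul_of_nonneg_left h2 h0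
    _ = lam * (η g * gsup g w) := by ring

lemma aux_attain {p : ℕ} (G : Finset (Finset (Fin p))) (η : Finset (Fin p) → ℝ)
    (hne : ∀ g ∈ G, g.Nonempty) (hη : ∀ g ∈ G, 0 < η g) (lam : ℝ) (hlam : 0 < lam)
    (w : Fin p → ℝ) :
    ∃ ξ : Finset (Fin p) → Fin p → ℝ, DualFeasible G η lam ξ ∧ (∀ g, g ∉ G → ξ g = 0) ∧
      ∑ j, w j * ∑ g ∈ G, ξ g j = lam * Omega G η w := by
  classical
  have hc : ∀ g : Finset (Fin p), ∃ v : Fin p → ℝ, (g ∉ G → v = 0) ∧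
      (g ∈ G → (∀ j, j ∉ g → v j = 0) ∧ l1 v ≤ lam * η g ∧
        ∑ j, w j * v j = lam * (η g * gsup g w)) := by
    intro g
    by_cases hg : g ∈ G
    · obtain ⟨j0, hj0, he⟩ := aux_gsup_eq g (hne g hg) w
      have hpos : 0 < lam * η g := mul_pos hlam (hη g hg)
      refine ⟨Pi.single j0 (lam * η g * (SignType.sign (w j0) : ℝ)),
        fun h => absurd hg h, fun _ => ⟨?_, ?_, ?_⟩⟩
      · intro j hj
        have : j ≠ j0 := fun h => hj (h ▸ hj0)
        simp [this]
      · unfold l1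
        rw [Finset.sum_eq_single j0]
        · rw [Pi.single_eq_same, abs_mul, abs_of_pos hpos]
          have : |((SignType.sign (w j0) : SignType) : ℝ)| ≤ 1 := by
            cases SignType.sign (w j0) <;> simp
          nlinarith
        · intro b _ hb
          simp [hb]
        · simp
      · rw [Finset.sum_eq_single j0]
        · rw [Pi.single_eq_same, he, ← self_mul_sign]
          ring
        · intro b _ hb
          simp [hb]
        · simp
    · exact ⟨0, fun _ => rfl, fun h => absurd h hg⟩
  choose ξ h1 h2 using hc
  refine ⟨ξ, fun g hg => ⟨(h2 g hg).1, (h2 g hg).2.1⟩, h1, ?_⟩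
  simp_rw [Finset.mul_sum]
  rw [Finset.sum_comm]
  unfold Omega
  rw [Finset.mul_sum]
  exact Finset.sum_congr rfl fun g hg => (h2 g hg).2.2

lemma aux_compact {p : ℕ} (G : Finset (Finset (Fin p))) (η : Finset (Fin p) → ℝ) (lam : ℝ) :
    IsCompact {ξ : Finset (Fin p) → Fin p → ℝ |
      DualFeasible G η lam ξ ∧ ∀ g, g ∉ G → ξ g = 0} := by
  have hK : IsCompact (Set.pi Set.univ fun g : Finset (Fin p) =>
      Set.pi Set.univ fun _ : Fin p => Set.Icc (-|lam * η g|) |lam * η g|) :=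
    isCompact_univ_pi fun g => isCompact_univ_pi fun _ => isCompact_Icc
  refine hK.of_isClosed_subset ?_ ?_
  · have e : {ξ : Finset (Fin p) → Fin p → ℝ | DualFeasible G η lam ξ ∧ ∀ g, g ∉ G → ξ g = 0}
      = (⋂ g, ⋂ (_ : g ∈ G), ((⋂ j, ⋂ (_ : j ∉ g), {ξ | ξ g j = 0}) ∩
          {ξ | l1 (ξ g) ≤ lam * η g})) ∩ ⋂ g, ⋂ (_ : g ∉ G), {ξ | ξ g = 0} := by
      ext ξ
      simp [DualFeasible]
    rw [e]
    refine IsClosed.inter (isClosed_iInter fun g => isClosed_iInter fun _ => IsClosed.inter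
      (isClosed_iInter fun j => isClosed_iInter fun _ => ?_) ?_)
      (isClosed_iInter fun g => isClosed_iInter fun _ => ?_)
    · exact isClosed_eq (by fun_prop) continuous_const
    · unfold l1
      exact isClosed_le (by fun_prop) continuous_const
    · exact isClosed_eq (by fun_prop) continuous_const
  · rintro ξ ⟨h1, h2⟩ g _ j _
    rw [Set.mem_Icc, ← abs_le]
    by_cases hg : g ∈ G
    · calc |ξ g j| ≤ l1 (ξ g) :=
          Finset.single_le_sum (f := fun j => |ξ g j|) (fun i _ => abs_nonneg _)
            (Finset.mem_univ j)
        _ ≤ lam * η g := (h1 g hg).2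
        _ ≤ _ := le_abs_self _
    · rw [h2 g hg]
      simpa using abs_nonneg (lam * η g)

lemma aux_convex {p : ℕ} (G : Finset (Finset (Fin p))) (η : Finset (Fin p) → ℝ) (lam : ℝ)
    (ξ ζ : Finset (Fin p) → Fin p → ℝ) (h : DualFeasible G η lam ξ) (h' : DualFeasible G η lam ζ)
    (t : ℝ) (ht0 : 0 ≤ t) (ht1 : t ≤ 1) :
    DualFeasible G η lam (fun g j => (1 - t) * ξ g j + t * ζ g j) := by
  intro g hg
  refine ⟨fun j hj => by simp [(h g hg).1 j hj, (h' g hg).1 j hj], ?_⟩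
  have h1 := (h g hg).2
  have h2 := (h' g hg).2
  have : l1 (fun j => (1 - t) * ξ g j + t * ζ g j) ≤ (1 - t) * l1 (ξ g) + t * l1 (ζ g) := by
    unfold l1
    rw [Finset.mul_sum, Finset.mul_sum, ← Finset.sum_add_distrib]
    refine Finset.sum_le_sum fun j _ => ?_
    calc _ ≤ |(1 - t) * ξ g j| + |t * ζ g j| := abs_add_le _ _
      _ = _ := by rw [abs_mul, abs_mul, abs_of_nonneg ht0, abs_of_nonneg (by linarith : 0 ≤ 1 - t)]
  nlinarith [mul_le_mul_of_nonneg_left h1 (by linarith : 0 ≤ 1 - t),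
    mul_le_mul_of_nonneg_left h2 ht0]

lemma aux_small (a b : ℝ) (hb : 0 ≤ b) (h : ∀ t : ℝ, 0 < t → t ≤ 1 → t * a ≤ t ^ 2 * b) :
    a ≤ 0 := by
  by_contra hc
  push Not at hc
  have h2 : 0 < a + b := by linarith
  have h3 := h (a / (a + b) / 2) (by positivity) (by
    rw [div_div, div_le_one (by positivity)]; linarith)
  have ht : 0 < a / (a + b) / 2 := by positivity
  have h4 : a ≤ a / (a + b) / 2 * b := by
    nlinarith
  have h5 : a / (a + b) / 2 * b = a * b / (2 * (a + b)) := by field_simp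
  rw [h5, le_div_iff₀ (by positivity)] at h4
  nlinarith [mul_nonneg hc.le hb, mul_pos hc hc]

lemma aux_weak {p : ℕ} (u w z : Fin p → ℝ) :
    (1/2) * ∑ j, (u j - w j)^2 + ∑ j, w j * z j + (1/2) * ∑ j, (u j - z j)^2
      = (1/2) * ∑ j, (u j)^2 + (1/2) * ∑ j, (u j - w j - z j)^2 := by
  simp only [Finset.mul_sum, ← Finset.sum_add_distrib]
  exact Finset.sum_congr rfl fun j _ => by ring

/-- strong duality — the optimal primal (proximal) value plus the optimal
dual value equals `½‖u‖₂²`. -/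
theorem stmt4 {p : ℕ} (G : Finset (Finset (Fin p))) (η : Finset (Fin p) → ℝ)
    (hne : ∀ g ∈ G, g.Nonempty) (hη : ∀ g ∈ G, 0 < η g)
    (hcover : ∀ j : Fin p, ∃ g ∈ G, j ∈ g)
    (lam : ℝ) (hlam : 0 < lam) (u : Fin p → ℝ) :
    sInf {v : ℝ | ∃ w : Fin p → ℝ, v = proxObj G η lam u w}
      + sInf {v : ℝ | ∃ ξ : Finset (Fin p) → Fin p → ℝ,
          DualFeasible G η lam ξ ∧ v = dualObj G u ξ}
      = (1/2) * ∑ j, (u j)^2 := by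
  obtain ⟨ξ₀, ⟨hf₀, hz₀⟩, hmin⟩ := (aux_compact G η lam).exists_isMinOn
    (f := dualObj G u)
    ⟨0, fun g hg => ⟨fun _ _ => rfl, by
      simpa [l1] using (mul_pos hlam (hη g hg)).le⟩, fun _ _ => rfl⟩
    (by unfold dualObj; fun_prop)
  set w : Fin p → ℝ := fun j => u j - ∑ g ∈ G, ξ₀ g j with hw
  obtain ⟨ζ, hfζ, hzζ, hζ⟩ := aux_attain G η hne hη lam hlam w
  have key : ∑ j, w j * (∑ g ∈ G, ζ g j - ∑ g ∈ G, ξ₀ g j) ≤ 0 := by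
    refine aux_small _ ((1/2) * ∑ j, (∑ g ∈ G, ζ g j - ∑ g ∈ G, ξ₀ g j)^2)
      (by positivity) fun t ht0 ht1 => ?_
    have h := hmin (a := fun g j => (1 - t) * ξ₀ g j + t * ζ g j)
      ⟨aux_convex G η lam ξ₀ ζ hf₀ hfζ t ht0.le ht1, fun g hg => by
        ext j; simp [hz₀ g hg, hzζ g hg]⟩
    have e : dualObj G u (fun g j => (1 - t) * ξ₀ g j + t * ζ g j)
        = dualObj G u ξ₀ - t * ∑ j, w j * (∑ g ∈ G, ζ g j - ∑ g ∈ G, ξ₀ g j)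
          + t ^ 2 * ((1/2) * ∑ j, (∑ g ∈ G, ζ g j - ∑ g ∈ G, ξ₀ g j)^2) := by
      unfold dualObj
      simp only [Finset.sum_add_distrib, ← Finset.mul_sum]
      simp only [Finset.mul_sum (s := (Finset.univ : Finset (Fin p))),
        ← Finset.sum_add_distrib, ← Finset.sum_sub_distrib]
      refine Finset.sum_congr rfl fun j _ => ?_
      simp only [hw, Finset.sum_sub_distrib]
      ring
    have h' : dualObj G u ξ₀ ≤ dualObj G u (fun g j => (1 - t) * ξ₀ g j + t * ζ g j) := h
    rw [e] at h'
    linarith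
  have hle : lam * Omega G η w ≤ ∑ j, w j * ∑ g ∈ G, ξ₀ g j := by
    simp only [mul_sub, Finset.sum_sub_distrib] at key
    linarith
  have weak : ∀ (w' : Fin p → ℝ) (ξ : Finset (Fin p) → Fin p → ℝ), DualFeasible G η lam ξ →
      (1/2) * ∑ j, (u j)^2 ≤ proxObj G η lam u w' + dualObj G u ξ := by
    intro w' ξ hξ
    have h1 := aux_pair_le G η lam ξ hξ w'
    have h2 := aux_weak u w' (fun j => ∑ g ∈ G, ξ g j)
    have h3 : 0 ≤ (1/2) * ∑ j, (u j - w' j - ∑ g ∈ G, ξ g j)^2 := by positivity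
    unfold proxObj dualObj
    linarith
  have strong : proxObj G η lam u w + dualObj G u ξ₀ = (1/2) * ∑ j, (u j)^2 := by
    refine le_antisymm ?_ (weak w ξ₀ hf₀)
    have h2 := aux_weak u w (fun j => ∑ g ∈ G, ξ₀ g j)
    have h3 : ∑ j, (u j - w j - ∑ g ∈ G, ξ₀ g j)^2 = 0 :=
      Finset.sum_eq_zero fun j _ => by simp only [hw]; ring
    rw [h3] at h2
    unfold proxObj dualObj
    linarith
  have l1' : IsLeast {v : ℝ | ∃ w : Fin p → ℝ, v = proxObj G η lam u w}
      (proxObj G η lam u w) := by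
    refine ⟨⟨w, rfl⟩, ?_⟩
    rintro v ⟨w', rfl⟩
    linarith [weak w' ξ₀ hf₀]
  have l2' : IsLeast {v : ℝ | ∃ ξ : Finset (Fin p) → Fin p → ℝ,
          DualFeasible G η lam ξ ∧ v = dualObj G u ξ} (dualObj G u ξ₀) := by
    refine ⟨⟨ξ₀, hf₀, rfl⟩, ?_⟩
    rintro v ⟨ξ, hξ, rfl⟩
    linarith [weak w ξ hξ]
  rw [l1'.csInf_eq, l2'.csInf_eq, strong]
end
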